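/- Let x ∈ ℝ with 0 < x, and define γ : ℕ → ℝ by γ(0) = 1 and γ(n) = 2x/(n+1) for n ≥ 1. Then the following are equivalent: (i) for every n ∈ ℕ, the 3×3 real Hankel matrix A(n) with entries A(n)_{ij} = γ(n + i + j), 0 ≤ i, j ≤ 2, is positive semidefinite; (ii) x ≤ 9/16. -/

import Mathlib

/-!
For `n ≥ 1` the matrix `A n` is `2 * x` times a matrix `(1 / (i + j + n + 1))`, which is the Gram
matrix of exponentials in `L²(0, ∞)`. For `n = 0` it is `2 * x` times the Hilbert matrix `H`
perturbed by `1 - 2 * x` in the top left corner. If `M w = u` with `M` positive semidefinite, then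
`M + t u u*` is positive semidefinite exactly when `1 + t ⟨w, u⟩ ≥ 0`; the threshold `9 / 16` thus
comes from the top left entry `9` of the inverse of `H`.
-/

open MeasureTheory Matrix Set

section RankOne

open scoped ComplexOrder

variable {𝕜 n : Type*} [RCLike 𝕜] [Fintype n]

theorem conjTranspose_one_add_smul_vecMulVec_mul_mul_self [DecidableEq n] {M : Matrix n n 𝕜}
    (hM : M.IsHermitian) {w u : n → 𝕜} (hw : M *ᵥ w = u) {s : ℝ} (hs : star u ⬝ᵥ w = s) (c : ℝ) :
    (1 + c • vecMulVec w (star u))ᴴ * M * (1 + c • vecMulVec w (star u)) =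
      M + (2 * c + c ^ 2 * s) • vecMulVec u (star u) := by
  have hleft : vecMulVec u (star w) * M = vecMulVec u (star u) := by
    rw [vecMulVec_mul, ← hw, star_mulVec, hM.eq]
  have hright : M * vecMulVec w (star u) = vecMulVec u (star u) := by
    rw [mul_vecMulVec, hw]
  have hmid : vecMulVec u (star u) * vecMulVec w (star u) = s • vecMulVec u (star u) := by
    rw [vecMulVec_mul_vecMulVec, hs, vecMulVec_smul, RCLike.real_smul_eq_coe_smul (K := 𝕜)]
  simp only [conjTranspose_add, conjTranspose_one, conjTranspose_smul, conjTranspose_vecMulVec,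
    star_star, star_trivial, add_mul, mul_add, one_mul, mul_one, Matrix.smul_mul, Matrix.mul_smul,
    hleft, hright, hmid]
  module

theorem posSemidef_add_smul_vecMulVec_iff {M : Matrix n n 𝕜} (hM : M.PosSemidef) {w u : n → 𝕜}
    (hw : M *ᵥ w = u) (t : ℝ) :
    (M + t • vecMulVec u (star u)).PosSemidef ↔ 0 ≤ 1 + t * RCLike.re (star w ⬝ᵥ u) := by
  classical
  obtain ⟨s, hs_nonneg, hs⟩ : ∃ s : ℝ, 0 ≤ s ∧ (s : 𝕜) = star w ⬝ᵥ u :=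
    RCLike.nonneg_iff_exists_ofReal.mp (hw ▸ hM.dotProduct_mulVec_nonneg w)
  have hs_star : star u ⬝ᵥ w = s := by
    rw [star_dotProduct, ← hs, RCLike.star_def, RCLike.conj_ofReal]
  rw [← hs, RCLike.ofReal_re]
  constructor
  · intro h
    have hform : star w ⬝ᵥ (M + t • vecMulVec u (star u)) *ᵥ w = ((s * (1 + t * s) : ℝ) : 𝕜) := by
      simp only [add_mulVec, smul_mulVec, vecMulVec_mulVec, hw, hs_star, op_smul_eq_smul,
        dotProduct_add, dotProduct_smul, ← hs, smul_eq_mul, RCLike.real_smul_eq_coe_mul]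
      push_cast
      ring
    have hform_nonneg : 0 ≤ s * (1 + t * s) :=
      RCLike.ofReal_nonneg.mp (hform ▸ h.dotProduct_mulVec_nonneg w)
    rcases hs_nonneg.eq_or_lt with rfl | hs_pos
    · simp
    · exact nonneg_of_mul_nonneg_right hform_nonneg hs_pos
  · intro h
    -- The root `(√(1 + t s) - 1) / s`, rationalized so that `s = 0` needs no separate treatment.
    obtain ⟨c, hc⟩ : ∃ c : ℝ, 2 * c + c ^ 2 * s = t := by
      refine ⟨t / (1 + √(1 + t * s)), ?_⟩
      have : 1 + √(1 + t * s) ≠ 0 := by positivity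
      field_simp
      linear_combination - t * Real.sq_sqrt h
    rw [← hc, ← conjTranspose_one_add_smul_vecMulVec_mul_mul_self hM.isHermitian hw hs_star]
    exact hM.conjTranspose_mul_mul_same _

end RankOne

section Gram

variable {α n 𝕜 E : Type*} [MeasurableSpace α] {μ : Measure α} [Finite n] [RCLike 𝕜]
  [NormedAddCommGroup E] [InnerProductSpace 𝕜 E]

open scoped ComplexOrder in
theorem posSemidef_integral_inner {f : n → α → E} (hf : ∀ i, MemLp (f i) 2 μ) :
    (of fun i j ↦ ∫ a, inner 𝕜 (f i a) (f j a) ∂μ).PosSemidef := by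
  convert posSemidef_gram 𝕜 fun i ↦ (hf i).toLp using 1
  ext i j
  rw [of_apply, gram_apply, L2.inner_def]
  refine integral_congr_ae ?_
  filter_upwards [(hf i).coeFn_toLp, (hf j).coeFn_toLp] with a hi hj
  rw [hi, hj]

theorem posSemidef_inv_add {s : n → ℝ} (hs : ∀ i, 0 < s i) :
    (of fun i j ↦ (s i + s j)⁻¹).PosSemidef := by
  have hexp (i : n) : MemLp (fun t ↦ Real.exp (-s i * t)) 2 (volume.restrict (Ioi 0)) := by
    rw [memLp_two_iff_integrable_sq (by fun_prop)]
    simp_rw [← Real.exp_nat_mul, ← mul_assoc]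
    exact integrableOn_exp_mul_Ioi (by have := hs i; push_cast; linarith) 0
  have hentry (i j : n) : ∫ t in Ioi (0 : ℝ), inner ℝ (Real.exp (-s i * t)) (Real.exp (-s j * t)) =
      (s i + s j)⁻¹ := by
    have hneg : -s j + -s i < 0 := by linarith [hs i, hs j]
    simp only [RCLike.inner_apply, conj_trivial, ← Real.exp_add, ← add_mul,
      integral_exp_mul_Ioi hneg, mul_zero, Real.exp_zero]
    rw [← neg_add, neg_div_neg_eq, one_div, add_comm]
  simpa only [hentry] using posSemidef_integral_inner (𝕜 := ℝ) hexp

end Gram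

/-- The `k × k` generalized Hilbert matrix, with entries `1 / (i + j + a)` for `0 ≤ i, j < k`;
`a = 1` is the classical Hilbert matrix. Up to a factor, its shifts in `a` are the Hankel moment
matrices of the Bergman shift. -/
noncomputable def generalizedHilbert (k : ℕ) (a : ℝ) : Matrix (Fin k) (Fin k) ℝ :=
  of fun i j ↦ (i + j + a)⁻¹

theorem generalizedHilbert_apply (k : ℕ) (a : ℝ) (i j : Fin k) :
    generalizedHilbert k a i j = (i + j + a)⁻¹ :=
  rfl

theorem posSemidef_generalizedHilbert (k : ℕ) {a : ℝ} (ha : 0 < a) :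
    (generalizedHilbert k a).PosSemidef := by
  convert posSemidef_inv_add (s := fun i : Fin k ↦ i + a / 2) fun i ↦ by positivity using 1
  ext i j
  rw [generalizedHilbert_apply, of_apply]
  ring

theorem generalizedHilbert_three_mulVec_eq_single {a : ℝ} (ha : 0 < a) :
    generalizedHilbert 3 a *ᵥ ((a * (a + 1) * (a + 2) / 4) •
      ![(a + 1) * (a + 2), -2 * (a + 2) * (a + 3), (a + 3) * (a + 4)]) = Pi.single 0 1 := by
  ext i
  simp only [mulVec, dotProduct, generalizedHilbert_apply, Fin.sum_univ_three, Pi.smul_apply,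
    smul_eq_mul, cons_val_zero, cons_val_one, cons_val]
  fin_cases i <;> simp <;> field_simp <;> ring

theorem posSemidef_smul_generalizedHilbert_three_add_single_iff {a c : ℝ} (ha : 0 < a) (hc : 0 < c)
    (t : ℝ) :
    (c • generalizedHilbert 3 a + single 0 0 t).PosSemidef ↔
      0 ≤ c + a * ((a + 1) * (a + 2) / 2) ^ 2 * t := by
  set w : Fin 3 → ℝ := (a * (a + 1) * (a + 2) / 4) •
    ![(a + 1) * (a + 2), -2 * (a + 2) * (a + 3), (a + 3) * (a + 4)]
  have hsolve : (c • generalizedHilbert 3 a) *ᵥ (c⁻¹ • w) = Pi.single 0 1 := by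
    rw [smul_mulVec, mulVec_smul, smul_inv_smul₀ hc.ne',
      generalizedHilbert_three_mulVec_eq_single ha]
  have hsingle : single (0 : Fin 3) (0 : Fin 3) t =
      t • vecMulVec (Pi.single 0 1) (star (Pi.single 0 1)) := by
    rw [Pi.star_single, star_one, ← single_eq_single_vecMulVec_single, smul_single, smul_eq_mul,
      mul_one]
  have hentry : star (c⁻¹ • w) ⬝ᵥ Pi.single 0 1 = a * ((a + 1) * (a + 2) / 2) ^ 2 / c := by
    simp only [w, star_trivial, dotProduct_single, Pi.smul_apply, smul_eq_mul, cons_val_zero,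
      mul_one]
    ring
  rw [hsingle, posSemidef_add_smul_vecMulVec_iff ((posSemidef_generalizedHilbert 3 ha).smul hc.le)
    hsolve, hentry, RCLike.re_to_real, ← mul_nonneg_iff_of_pos_left hc]
  congr! 1
  field_simp

/-- 2-hyponormality of the rank-one perturbation of the Bergman shift with weights
`√x, √(2/3), √(3/4), …`: the Hankel moment matrices `(γ(n+i+j))_{0 ≤ i,j ≤ 2}` are all
positive semidefinite if and only if `x ≤ 9/16`. -/
theorem stmt_18 (x : ℝ) (hx : 0 < x)
    (γ : ℕ → ℝ) (hγ0 : γ 0 = 1) (hγ : ∀ n : ℕ, 1 ≤ n → γ n = 2 * x / (n + 1))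
    (A : ℕ → Matrix (Fin 3) (Fin 3) ℝ)
    (hA : ∀ n (i j : Fin 3), A n i j = γ (n + i + j)) :
    (∀ n : ℕ, (A n).PosSemidef) ↔ x ≤ 9 / 16 := by
  have hA_zero : A 0 = (2 * x) • generalizedHilbert 3 1 + single 0 0 (1 - 2 * x) := by
    ext i j
    fin_cases i <;> fin_cases j <;> simp [hA, hγ0, hγ, generalizedHilbert_apply] <;> ring
  have hA_pos (n : ℕ) (hn : 1 ≤ n) : A n = (2 * x) • generalizedHilbert 3 (n + 1) := by
    ext i j
    rw [hA, hγ _ (by omega), Matrix.smul_apply, generalizedHilbert_apply, smul_eq_mul,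
      div_eq_mul_inv]
    push_cast
    ring
  have hzero_iff : (A 0).PosSemidef ↔ x ≤ 9 / 16 := by
    rw [hA_zero, posSemidef_smul_generalizedHilbert_three_add_single_iff one_pos (by positivity)]
    constructor <;> intro h <;> linarith
  refine ⟨fun h ↦ hzero_iff.mp (h 0), fun h n ↦ ?_⟩
  rcases n.eq_zero_or_pos with rfl | hn
  · exact hzero_iff.mpr h
  · rw [hA_pos n hn]
    exact (posSemidef_generalizedHilbert 3 (by positivity)).smul (by positivity)
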